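/- arXiv:2505.23610 — 2 statements merged into one kernel-verified Lean document; each statement's English description precedes it below -/
import Mathlib

section
/- Assume b_i c_i > 0 for all 1 ≤ i ≤ k. Let λ ∈ ℝ, α ∈ (−π, π], β ∈ ℝ, and suppose λ is an eigenvalue of the k×k complex matrix f(e^{−i(α+iβ)}), i.e. det(f(e^{−i(α+iβ)}) − λ·Id) = 0. Then α = 0, or α = π, or β = (1/2)·log(∏_{i=1}^k b_i/c_i). -/
/-!
Context: symbol of a tridiagonal k-Toeplitz operator. We use `k + 1` resonators
(indices `Fin (k+1)`), so that the paper's `k ≥ 1` is automatic.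
`matA0` is the tridiagonal block with diagonal `a`, superdiagonal `b`, subdiagonal `c`;
`matA1` has its only nonzero entry `c_k` at position `(1, k)` (Lean: `(0, last)`);
`matAm1` has its only nonzero entry `b_k` at position `(k, 1)` (Lean: `(last, 0)`).
The symbol is `f z = A_{-1} z⁻¹ + A_0 + A_1 z`.
-/

noncomputable def matA0 (k : ℕ) (a b c : Fin (k + 1) → ℝ) :
    Matrix (Fin (k + 1)) (Fin (k + 1)) ℂ :=
  Matrix.of fun i j =>
    if i = j then (a i : ℂ)
    else if (j : ℕ) = (i : ℕ) + 1 then (b i : ℂ)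
    else if (i : ℕ) = (j : ℕ) + 1 then (c j : ℂ)
    else 0

noncomputable def matA1 (k : ℕ) (c : Fin (k + 1) → ℝ) :
    Matrix (Fin (k + 1)) (Fin (k + 1)) ℂ :=
  Matrix.of fun i j => if i = 0 ∧ j = Fin.last k then (c (Fin.last k) : ℂ) else 0

noncomputable def matAm1 (k : ℕ) (b : Fin (k + 1) → ℝ) :
    Matrix (Fin (k + 1)) (Fin (k + 1)) ℂ :=
  Matrix.of fun i j => if i = Fin.last k ∧ j = 0 then (b (Fin.last k) : ℂ) else 0

/-- The symbol `f(z) = A_{-1} z⁻¹ + A_0 + A_1 z` of the tridiagonal k-Toeplitz operator. -/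
noncomputable def symb (k : ℕ) (a b c : Fin (k + 1) → ℝ) (z : ℂ) :
    Matrix (Fin (k + 1)) (Fin (k + 1)) ℂ :=
  z⁻¹ • matAm1 k b + matA0 k a b c + z • matA1 k c


theorem aux_transfer (u : ℕ → ℂ) (A B C : ℕ → ℝ) (N : ℕ)
    (hB : ∀ i < N, B i ≠ 0)
    (h : ∀ i < N, (C i : ℂ) * u i + (A i : ℂ) * u (i + 1) + (B i : ℂ) * u (i + 2) = 0) :
    ∃ p q r s : ℝ, u N = p * u 0 + q * u 1 ∧ u (N + 1) = r * u 0 + s * u 1 ∧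
      p * s - q * r = ∏ i ∈ Finset.range N, C i / B i := by
  induction N with
  | zero => exact ⟨1, 0, 0, 1, by simp, by simp, by simp⟩
  | succ n ih =>
    obtain ⟨p, q, r, s, h1, h2, h3⟩ := ih (fun i hi => hB i (by omega)) (fun i hi => h i (by omega))
    have hb := hB n (by omega)
    have hb' : (B n : ℂ) ≠ 0 := by exact_mod_cast hb
    have hn := h n (by omega)
    refine ⟨r, s, -(C n * p + A n * r) / B n, -(C n * q + A n * s) / B n, h2, ?_, ?_⟩
    · have : u (n + 2) = -((C n : ℂ) * u n + (A n : ℂ) * u (n + 1)) / B n := by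
        rw [eq_div_iff hb']
        linear_combination hn
      rw [show n + 1 + 1 = n + 2 from rfl, this, h1, h2]
      push_cast
      field_simp
      ring
    · rw [Finset.prod_range_succ, ← h3]
      field_simp
      ring

theorem aux_sum (k m : ℕ) (g : Fin (k + 1) → ℂ) :
    (∑ j : Fin (k + 1), if (j : ℕ) = m then g j else 0)
      = if h : m < k + 1 then g ⟨m, h⟩ else 0 := by
  split_ifs with h
  · rw [Finset.sum_eq_single ⟨m, h⟩]
    · simp
    · intro j _ hj
      rw [if_neg]
      intro h'
      exact hj (Fin.ext h')
    · simp
  · apply Finset.sum_eq_zero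
    intro j _
    rw [if_neg]
    have := j.2
    omega

noncomputable def auxExt {R : Type} [Zero R] (k : ℕ) (g : Fin (k + 1) → R) (n : ℕ) : R :=
  if h : n < k + 1 then g ⟨n, h⟩ else 0

theorem auxExt_val {R : Type} [Zero R] (k : ℕ) (g : Fin (k + 1) → R) (i : Fin (k + 1)) :
    auxExt k g i = g i := by
  simp only [auxExt, dif_pos i.2]

theorem auxExt_mk {R : Type} [Zero R] (k : ℕ) (g : Fin (k + 1) → R) (n : ℕ) (h : n < k + 1) :
    auxExt k g n = g ⟨n, h⟩ := by
  simp [auxExt, h]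

theorem aux_row (k : ℕ) (a b c : Fin (k + 1) → ℝ) (z : ℂ) (lam : ℝ) (v : Fin (k + 1) → ℂ)
    (i : Fin (k + 1)) :
    ((symb k a b c z - (lam : ℂ) • (1 : Matrix (Fin (k + 1)) (Fin (k + 1)) ℂ)).mulVec v) i
      = ((if (i : ℕ) = 0 then c (Fin.last k) else auxExt k c (i - 1) : ℝ) : ℂ)
          * (if (i : ℕ) = 0 then z * v (Fin.last k) else auxExt k v (i - 1))
        + ((a i - lam : ℝ) : ℂ) * v i
        + (b i : ℂ) * (if (i : ℕ) + 1 < k + 1 then auxExt k v (i + 1) else z⁻¹ * v 0) := by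
  have hent : ∀ j : Fin (k + 1),
      (symb k a b c z - (lam : ℂ) • (1 : Matrix (Fin (k + 1)) (Fin (k + 1)) ℂ)) i j * v j
      = (if (j : ℕ) = (i : ℕ) then ((a i : ℂ) - lam) * v j else 0)
        + (if (j : ℕ) = (i : ℕ) + 1 then (b i : ℂ) * v j else 0)
        + (if (i : ℕ) = 0 then 0 else if (j : ℕ) = (i : ℕ) - 1 then (c j : ℂ) * v j else 0)
        + (if (i : ℕ) = k then (if (j : ℕ) = 0 then z⁻¹ * b i * v j else 0) else 0)
        + (if (i : ℕ) = 0 then (if (j : ℕ) = k then z * c j * v j else 0) else 0) := by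
    intro j
    have e1 : (if i = j then (a i : ℂ) else if (j : ℕ) = (i : ℕ) + 1 then (b i : ℂ)
        else if (i : ℕ) = (j : ℕ) + 1 then (c j : ℂ) else 0)
        - (lam : ℂ) * (if i = j then 1 else 0)
        = (if (j : ℕ) = (i : ℕ) then ((a i : ℂ) - lam) else 0)
        + (if (j : ℕ) = (i : ℕ) + 1 then (b i : ℂ) else 0)
        + (if (i : ℕ) = 0 then 0 else if (j : ℕ) = (i : ℕ) - 1 then (c j : ℂ) else 0) := by
      simp only [Fin.ext_iff]
      split_ifs <;> first | omega | simp
    have e2 : (if i = Fin.last k ∧ j = 0 then (b (Fin.last k) : ℂ) else 0)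
        = if (i : ℕ) = k then (if (j : ℕ) = 0 then (b i : ℂ) else 0) else 0 := by
      by_cases h : i = Fin.last k
      · have h' : (i : ℕ) = k := by rw [h]; rfl
        rw [← h, if_pos h']
        simp only [true_and, Fin.ext_iff, Fin.val_zero]
      · have : (i : ℕ) ≠ k := fun h' => h (Fin.ext h')
        simp [h, this]
    have e3 : (if i = 0 ∧ j = Fin.last k then (c (Fin.last k) : ℂ) else 0)
        = if (i : ℕ) = 0 then (if (j : ℕ) = k then (c j : ℂ) else 0) else 0 := by
      by_cases h : j = Fin.last k
      · have h' : (j : ℕ) = k := by rw [h]; rfl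
        rw [← h, if_pos h']
        simp only [and_true, Fin.ext_iff, Fin.val_zero]
      · have : (j : ℕ) ≠ k := fun h' => h (Fin.ext h')
        simp [h, this]
    simp only [symb, matA0, matA1, matAm1, Matrix.sub_apply, Matrix.add_apply, Matrix.smul_apply,
      Matrix.of_apply, smul_eq_mul, Matrix.one_apply]
    rw [e2, e3]
    have e4 : ∀ x y w t : ℂ, x + y + w - t = (y - t) + x + w := by intros; ring
    rw [e4, e1]
    simp only [add_mul, ite_mul, mul_ite, zero_mul, mul_zero, mul_assoc]
  simp only [Matrix.mulVec, dotProduct]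
  rw [Finset.sum_congr rfl (fun j _ => hent j)]
  simp only [Finset.sum_add_distrib]
  have hi := i.2
  have s3 : (∑ j : Fin (k + 1), if (i : ℕ) = 0 then (0 : ℂ) else
      if (j : ℕ) = (i : ℕ) - 1 then (c j : ℂ) * v j else 0)
      = if (i : ℕ) = 0 then 0 else
        ((auxExt k c (i - 1) : ℝ) : ℂ) * auxExt k v (i - 1) := by
    split_ifs with h
    · simp
    · rw [aux_sum, dif_pos (by omega), auxExt_mk k c _ (by omega), auxExt_mk k v _ (by omega)]
  have s4 : (∑ j : Fin (k + 1), if (i : ℕ) = k then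
      (if (j : ℕ) = 0 then z⁻¹ * b i * v j else 0) else 0)
      = if (i : ℕ) = k then z⁻¹ * b i * v 0 else 0 := by
    split_ifs with h
    · rw [aux_sum, dif_pos (by omega)]; rfl
    · simp
  have s5 : (∑ j : Fin (k + 1), if (i : ℕ) = 0 then
      (if (j : ℕ) = k then z * c j * v j else 0) else 0)
      = if (i : ℕ) = 0 then z * c (Fin.last k) * v (Fin.last k) else 0 := by
    split_ifs with h
    · rw [aux_sum, dif_pos (by omega)]; rfl
    · simp
  rw [s3, s4, s5, aux_sum, aux_sum, dif_pos hi]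
  have s2 : (if h : (i : ℕ) + 1 < k + 1 then (b i : ℂ) * v ⟨i + 1, h⟩ else 0)
      = if (i : ℕ) + 1 < k + 1 then (b i : ℂ) * auxExt k v (i + 1) else 0 := by
    split_ifs with h
    · rw [auxExt_mk k v _ h]
    · rfl
  rw [s2]
  push_cast
  by_cases h0 : (i : ℕ) = 0 <;> by_cases hk : (i : ℕ) = k
  · have : ¬ ((i : ℕ) + 1 < k + 1) := by omega
    rw [if_neg this, if_neg this]
    simp only [if_pos h0, if_pos hk]; ring
  · have : ((i : ℕ) + 1 < k + 1) := by omega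
    rw [if_pos this, if_pos this]
    simp only [if_pos h0, if_neg hk]; ring
  · have : ¬ ((i : ℕ) + 1 < k + 1) := by omega
    rw [if_neg this, if_neg this]
    simp only [if_neg h0, if_pos hk]; ring
  · have : ((i : ℕ) + 1 < k + 1) := by omega
    rw [if_pos this, if_pos this]
    simp only [if_neg h0, if_neg hk]; ring

/-- Either `z` is real or `|z|^2 = ∏ b/c`. -/
theorem aux_main (k : ℕ) (a b c : Fin (k + 1) → ℝ)
    (hbc : ∀ i, 0 < b i * c i) (lam : ℝ) (z : ℂ) (hz : z ≠ 0)
    (hev : (symb k a b c z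
          - (lam : ℂ) • (1 : Matrix (Fin (k + 1)) (Fin (k + 1)) ℂ)).det = 0)
    (him : z.im ≠ 0) : (∏ i, c i / b i) * (z.re ^ 2 + z.im ^ 2) = 1 := by
  obtain ⟨v, hv, hMv⟩ := Matrix.exists_mulVec_eq_zero_iff.mpr hev
  set C : ℕ → ℝ := fun n => if n = 0 then c (Fin.last k) else auxExt k c (n - 1) with hC
  set u : ℕ → ℂ := fun n => if n = 0 then z * v (Fin.last k) else
    if n < k + 2 then auxExt k v (n - 1) else z⁻¹ * v 0 with hu
  have hbne : ∀ i, b i ≠ 0 := fun i h => by have := hbc i; simp [h] at this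
  have hB : ∀ i < k + 1, auxExt k b i ≠ 0 := by
    intro i hi
    rw [auxExt_mk k b i hi]
    exact hbne _
  have hrec : ∀ i < k + 1, (C i : ℂ) * u i + ((auxExt k a i - lam : ℝ) : ℂ) * u (i + 1)
      + ((auxExt k b i : ℝ) : ℂ) * u (i + 2) = 0 := by
    intro i hi
    have h := aux_row k a b c z lam v ⟨i, hi⟩
    rw [hMv] at h
    rw [auxExt_mk k a i hi, auxExt_mk k b i hi]
    have u1 : u (i + 1) = v ⟨i, hi⟩ := by
      simp only [hu]
      rw [if_neg (by omega), if_pos (by omega), auxExt_mk k v _ (by omega)]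
      rfl
    have u0 : u i = if i = 0 then z * v (Fin.last k) else auxExt k v (i - 1) := by
      simp only [hu]
      rw [if_pos (show i < k + 2 by omega)]
    have u2 : u (i + 2) = if i + 1 < k + 1 then auxExt k v (i + 1) else z⁻¹ * v 0 := by
      simp only [hu]
      rw [if_neg (by omega)]
      have : i + 2 < k + 2 ↔ i + 1 < k + 1 := by omega
      simp only [this]
      rfl
    rw [u0, u1, u2]
    exact h.symm
  have huv : ∀ i : Fin (k + 1), u (i + 1) = v i := by
    intro i
    have := i.2
    simp only [hu]
    rw [if_neg (by omega), if_pos (by omega), Nat.add_sub_cancel, auxExt_val]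
  have hu0 : u 0 = z * v (Fin.last k) := by simp [hu]
  have hu1 : u 1 = v 0 := huv 0
  have huk : u (k + 1) = v (Fin.last k) := huv (Fin.last k)
  have huk2 : u (k + 1 + 1) = z⁻¹ * v 0 := by simp [hu]
  obtain ⟨p, q, r, s, h1, h2, h3⟩ := aux_transfer u _ _ _ (k + 1) hB hrec
  have hprod : (∏ i ∈ Finset.range (k + 1), C i / auxExt k b i) = ∏ i, c i / b i := by
    rw [Finset.prod_div_distrib, Finset.prod_div_distrib, Finset.prod_range_succ']
    congr 1
    · have : C 0 = auxExt k c k := by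
        rw [auxExt_mk k c k (by omega)]; simp [hC]; rfl
      rw [this]
      have : ∀ i ∈ Finset.range k, C (i + 1) = auxExt k c i := by
        intro i _; simp [hC]
      rw [Finset.prod_congr rfl this, ← Finset.prod_range_succ, ← Fin.prod_univ_eq_prod_range]
      exact Finset.prod_congr rfl fun i _ => auxExt_val k c i
    · rw [← Fin.prod_univ_eq_prod_range]
      exact Finset.prod_congr rfl fun i _ => auxExt_val k b i
  rw [hprod] at h3
  have hne : u 0 ≠ 0 ∨ u 1 ≠ 0 := by
    by_contra! hcon
    apply hv
    funext i
    obtain ⟨p', q', r', s', -, h2', -⟩ := aux_transfer u _ _ _ i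
      (fun j hj => hB j (by omega)) (fun j hj => hrec j (by omega))
    rw [← huv i, h2', hcon.1, hcon.2]
    simp
  have E1 : (p * z - 1) * u 0 + (q * z) * u 1 = 0 := by
    rw [huk] at h1
    linear_combination (-z) * h1 - hu0
  have E2 : (r * z) * u 0 + (s * z - 1) * u 1 = 0 := by
    rw [huk2, ← hu1] at h2
    have : z * z⁻¹ = 1 := mul_inv_cancel₀ hz
    linear_combination (-z) * h2 + u 1 * this
  have hdet : ((p : ℂ) * z - 1) * (s * z - 1) - (q * z) * (r * z) = 0 := by
    rcases hne with h | h
    · refine (mul_eq_zero.mp ?_).resolve_right h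
      linear_combination (s * z - 1) * E1 - (q * z) * E2
    · refine (mul_eq_zero.mp ?_).resolve_right h
      linear_combination (p * z - 1) * E2 - (r * z) * E1
  rw [← h3]
  have hre := congrArg Complex.re hdet
  have hI := congrArg Complex.im hdet
  simp at hre hI
  have ht : 2 * (p * s - q * r) * z.re = p + s := by
    apply mul_right_cancel₀ him
    linear_combination hI
  linear_combination z.re * ht - hre

/-- if `b_i c_i > 0` for all `i`, `λ ∈ ℝ`, `α ∈ (-π, π]`, `β ∈ ℝ` and `λ` is an
eigenvalue of `f(e^{-i(α+iβ)})`, then `α = 0`, or `α = π`, or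
`β = (1/2) log (∏ b_i / c_i)`. -/
theorem statement0 (k : ℕ) (a b c : Fin (k + 1) → ℝ)
    (hbc : ∀ i, 0 < b i * c i)
    (lam α β : ℝ) (hα : α ∈ Set.Ioc (-Real.pi) Real.pi)
    (hev :
      (symb k a b c (Complex.exp (-Complex.I * ((α : ℂ) + Complex.I * (β : ℂ))))
          - (lam : ℂ) • (1 : Matrix (Fin (k + 1)) (Fin (k + 1)) ℂ)).det = 0) :
    α = 0 ∨ α = Real.pi ∨ β = (1 / 2) * Real.log (∏ i, b i / c i) := by
  set z := Complex.exp (-Complex.I * ((α : ℂ) + Complex.I * (β : ℂ))) with hz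
  have hz' : z = Complex.exp ((β : ℂ) + (-α : ℝ) * Complex.I) := by
    rw [hz]
    congr 1
    push_cast
    linear_combination (-(β : ℂ)) * Complex.I_mul_I
  have hre : z.re = Real.exp β * Real.cos α := by
    rw [hz', Complex.exp_re]; simp
  have him : z.im = -(Real.exp β * Real.sin α) := by
    rw [hz', Complex.exp_im]; simp
  by_cases hs : Real.sin α = 0
  · rcases hα.2.lt_or_eq with h | h
    · left
      exact (Real.sin_eq_zero_iff_of_lt_of_lt hα.1 h).mp hs
    · right; left; exact h
  · right; right
    have himne : z.im ≠ 0 := by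
      rw [him]
      exact neg_ne_zero.mpr (mul_ne_zero (Real.exp_pos _).ne' hs)
    have h := aux_main k a b c hbc lam z (Complex.exp_ne_zero _) hev himne
    have hn : z.re ^ 2 + z.im ^ 2 = Real.exp (2 * β) := by
      rw [hre, him, two_mul, Real.exp_add]
      linear_combination (Real.exp β * Real.exp β) * Real.sin_sq_add_cos_sq α
    have hinv : ∏ i, b i / c i = (∏ i, c i / b i)⁻¹ := by
      rw [← Finset.prod_inv_distrib]
      exact Finset.prod_congr rfl fun i _ => (inv_div _ _).symm
    rw [hn] at h
    rw [hinv, inv_eq_of_mul_eq_one_right h, Real.log_exp]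
    ring
end

section
/- Let n ≥ 1, let a, b, c ∈ ℝ with bc > 0, set d := a/(2√(bc)), and assume U_n(d) ≠ 0. Let A be the n×n tridiagonal Toeplitz matrix with diagonal entries a, entry b in each position (i, i+1) and entry c in each position (i+1, i). Then A is invertible and, for all 1 ≤ i, j ≤ n: (A^{−1})_{ij} = (−1)^{i+j} · b^{j−i} · (√(bc))^{−(j−i+1)} · U_{i−1}(d)·U_{n−j}(d)/U_n(d) if i ≤ j, and (A^{−1})_{ij} = (−1)^{i+j} · c^{i−j} · (√(bc))^{−(i−j+1)} · U_{j−1}(d)·U_{n−i}(d)/U_n(d) if i > j. -/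
/-- Chebyshev polynomials of the second kind (as real functions):
`U₀ = 1`, `U₁(x) = 2x`, `U_{m+2}(x) = 2x U_{m+1}(x) - U_m(x)`. -/
noncomputable def chebU : ℕ → ℝ → ℝ
  | 0, _ => 1
  | 1, x => 2 * x
  | n + 2, x => 2 * x * chebU (n + 1) x - chebU n x

/-- The `n × n` tridiagonal Toeplitz matrix with diagonal `a`, entry `b` in positions
`(i, i+1)` and entry `c` in positions `(i+1, i)`. -/
noncomputable def triToep (n : ℕ) (a b c : ℝ) : Matrix (Fin n) (Fin n) ℝ :=
  Matrix.of fun i j =>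
    if i = j then a
    else if (j : ℕ) = (i : ℕ) + 1 then b
    else if (i : ℕ) = (j : ℕ) + 1 then c
    else 0


noncomputable def uZ (d : ℝ) (k : ℤ) : ℝ := (Polynomial.Chebyshev.U ℝ k).eval d

lemma uZ_rec (d : ℝ) (k : ℤ) : uZ d (k + 1) = 2 * d * uZ d k - uZ d (k - 1) := by
  have h := Polynomial.Chebyshev.U_add_two ℝ (k - 1)
  have e1 : k - 1 + 2 = k + 1 := by ring
  have e2 : k - 1 + 1 = k := by ring
  rw [e1, e2] at h
  simp [uZ, h]

lemma uZ_neg_one (d : ℝ) : uZ d (-1) = 0 := by simp [uZ]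

lemma uZ_zero (d : ℝ) : uZ d 0 = 1 := by simp [uZ]

lemma chebU_eq (d : ℝ) : ∀ k : ℕ, chebU k d = uZ d k
  | 0 => by simp [chebU, uZ]
  | 1 => by simp [chebU, uZ]
  | n + 2 => by
    rw [chebU, chebU_eq d (n + 1), chebU_eq d n]
    have h := uZ_rec d (n + 1)
    have e1 : ((n + 2 : ℕ) : ℤ) = (n : ℤ) + 1 + 1 := by push_cast; ring
    rw [e1, h]
    simp

lemma uZ_wron (d : ℝ) (i : ℕ) : ∀ m : ℤ,
    uZ d (i + 1) * uZ d m - uZ d i * uZ d (m - 1) = uZ d (i + m + 1) := by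
  induction i with
  | zero =>
    intro m
    have h1 := uZ_rec d 0
    have h2 := uZ_rec d m
    norm_num [uZ_neg_one, uZ_zero] at h1
    norm_num [uZ_zero, h1, h2]
  | succ i ih =>
    intro m
    have h := ih (m + 1)
    have h1 := uZ_rec d (i + 1)
    have h2 := uZ_rec d m
    have e1 : (i : ℤ) + (m + 1) + 1 = i + 1 + m + 1 := by ring
    rw [e1] at h
    simp only [add_sub_cancel_right] at h h1
    push_cast
    rw [← h, h1, h2]
    ring

lemma triToep_sum (n : ℕ) (a b c : ℝ) (g : ℤ → ℝ) (h0 : g (-1) = 0) (hn : g n = 0)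
    (i : Fin n) :
    ∑ k : Fin n, triToep n a b c i k * g (k : ℕ)
      = c * g ((i : ℕ) - 1) + a * g (i : ℕ) + b * g ((i : ℕ) + 1) := by
  obtain ⟨i, hi⟩ := i
  have h1 : ∀ k : Fin n, triToep n a b c ⟨i, hi⟩ k * g (k : ℕ)
      = (fun k : ℕ => (if k = i then a * g i else 0) + (if k = i + 1 then b * g (i + 1) else 0)
        + (if k = i - 1 then (if i = 0 then 0 else c * g (i - 1)) else 0)) (k : ℕ) := by
    rintro ⟨k, hk⟩
    simp only [triToep, Matrix.of_apply, Fin.mk.injEq]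
    rcases Nat.lt_trichotomy k i with h | h | h
    · by_cases h2 : i = k + 1
      · subst h2
        have h6 : k ≠ k + 1 + 1 := by omega
        simp [h6]
      · have : k ≠ i - 1 := by omega
        have h3 : i ≠ k := by omega
        have h4 : k ≠ i + 1 := by omega
        have h5 : k ≠ i := by omega
        simp [*]
    · subst h
      rcases k with _ | k <;> simp
    · by_cases h2 : k = i + 1
      · subst h2
        have : i + 1 ≠ i - 1 := by omega
        simp [this]
      · have : k ≠ i - 1 := by omega
        have h3 : i ≠ k := by omega
        have h4 : i ≠ k + 1 := by omega
        have h5 : k ≠ i := by omega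
        simp [*]
  rw [Finset.sum_congr rfl (fun k _ => h1 k), Fin.sum_univ_eq_sum_range
    (fun k : ℕ => (if k = i then a * g i else 0) + (if k = i + 1 then b * g (i + 1) else 0)
        + (if k = i - 1 then (if i = 0 then 0 else c * g (i - 1)) else 0)) n]
  rw [Finset.sum_add_distrib, Finset.sum_add_distrib, Finset.sum_ite_eq', Finset.sum_ite_eq',
    Finset.sum_ite_eq']
  have hm : i - 1 < n := by omega
  simp only [Finset.mem_range, hi, hm, if_true]
  have t1 : (if i + 1 < n then b * g (i + 1) else 0) = b * g (i + 1) := by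
    split_ifs with h
    · rfl
    · have : n = i + 1 := by omega
      subst this
      push_cast at hn
      simp [hn]
  have t2 : (if i = 0 then 0 else c * g (i - 1)) = c * g (i - 1) := by
    split_ifs with h
    · subst h
      simp [h0]
    · rfl
  rw [t1, t2]
  ring

noncomputable def gZ (n : ℕ) (s p d : ℝ) (i j : ℤ) : ℝ :=
  p ^ (j - i) * (uZ d (min i j) * uZ d (n - 1 - max i j)) / (s * uZ d n)

lemma gZ_rec (n : ℕ) (b c s d : ℝ) (hs : s ≠ 0) (hb : b ≠ 0) (hsq : s * s = b * c)
    (hU : uZ d n ≠ 0) (i j : ℕ) :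
    c * gZ n s (-b / s) d (i - 1) j + 2 * d * s * gZ n s (-b / s) d i j
      + b * gZ n s (-b / s) d (i + 1) j = if i = j then 1 else 0 := by
  have hp : -b / s ≠ 0 := div_ne_zero (neg_ne_zero.mpr hb) hs
  have p1 : (-b / s) ^ ((j : ℤ) - (i - 1)) = (-b / s) ^ ((j : ℤ) - i) * (-b / s) := by
    rw [← zpow_add_one₀ hp]; congr 1; ring
  have p2 : (-b / s) ^ ((j : ℤ) - (i + 1)) = (-b / s) ^ ((j : ℤ) - i) * (-b / s)⁻¹ := by
    rw [← zpow_sub_one₀ hp]; congr 1; ring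
  have q1 : c * (-b / s) = -s := by field_simp; linarith
  have q2 : b * (-b / s)⁻¹ = -s := by field_simp
  unfold gZ
  rw [p1, p2]
  set P := (-b / s) ^ ((j : ℤ) - i) with hP
  have key : ∀ x y z : ℝ, c * (P * (-b / s) * x / (s * uZ d n)) + 2 * d * s * (P * y / (s * uZ d n))
      + b * (P * (-b / s)⁻¹ * z / (s * uZ d n)) = P * (2 * d * y - x - z) / uZ d n := by
    intro x y z
    have : c * (P * (-b / s) * x / (s * uZ d n)) + 2 * d * s * (P * y / (s * uZ d n))
      + b * (P * (-b / s)⁻¹ * z / (s * uZ d n)) = (c * (-b / s)) * (P * x / (s * uZ d n))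
        + 2 * d * s * (P * y / (s * uZ d n)) + (b * (-b / s)⁻¹) * (P * z / (s * uZ d n)) := by ring
    rw [this, q1, q2]
    field_simp
    ring
  rw [key]
  rcases Nat.lt_trichotomy i j with h | h | h
  · rw [min_eq_left (by omega), min_eq_left (by omega), min_eq_left (by omega),
      max_eq_right (by omega), max_eq_right (by omega), max_eq_right (by omega), uZ_rec,
      if_neg (by omega)]
    ring
  · subst h
    rw [min_eq_left (by omega), min_eq_left (by omega), min_eq_right (by omega),
      max_eq_right (by omega), max_eq_right (by omega), max_eq_left (by omega), if_pos rfl]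
    have w := uZ_wron d i (n - 1 - i)
    have r := uZ_rec d i
    have e1 : (i : ℤ) + (n - 1 - i) + 1 = n := by ring
    have e2 : (n : ℤ) - 1 - i - 1 = n - 1 - (i + 1) := by ring
    rw [e1, e2, r] at w
    have hP1 : P = 1 := by rw [hP]; simp
    rw [hP1, div_eq_one_iff_eq hU, ← w]
    ring
  · rw [min_eq_right (by omega), min_eq_right (by omega), min_eq_right (by omega),
      max_eq_left (by omega), max_eq_left (by omega), max_eq_left (by omega), if_neg (by omega)]
    have r := uZ_rec d (n - 1 - i)
    have e1 : (n : ℤ) - 1 - i + 1 = n - 1 - (i - 1) := by ring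
    have e2 : (n : ℤ) - 1 - i - 1 = n - 1 - (i + 1) := by ring
    rw [e1, e2] at r
    rw [r]
    ring

/-- explicit inverse of a tridiagonal Toeplitz matrix via Chebyshev
polynomials of the second kind, with `d := a/(2√(bc))` and `U_n(d) ≠ 0`.
(Indices here are 0-based: the paper's `(i, j)` with `1 ≤ i ≤ j ≤ n` corresponds to
`(i-1, j-1)`, so `U_{i-1}` reads `chebU i` etc.) -/
theorem statement12 (n : ℕ) (hn : 1 ≤ n) (a b c : ℝ) (hbc : 0 < b * c)
    (d : ℝ) (hd : d = a / (2 * Real.sqrt (b * c))) (hU : chebU n d ≠ 0) :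
    IsUnit (triToep n a b c) ∧
    ∀ i j : Fin n,
      ((i : ℕ) ≤ (j : ℕ) →
        (triToep n a b c)⁻¹ i j
          = (-1 : ℝ) ^ ((i : ℕ) + (j : ℕ)) * b ^ ((j : ℕ) - (i : ℕ))
            * Real.sqrt (b * c) ^ (-(((j : ℕ) : ℤ) - ((i : ℕ) : ℤ) + 1))
            * chebU (i : ℕ) d * chebU (n - 1 - (j : ℕ)) d / chebU n d) ∧
      ((j : ℕ) < (i : ℕ) →
        (triToep n a b c)⁻¹ i j
          = (-1 : ℝ) ^ ((i : ℕ) + (j : ℕ)) * c ^ ((i : ℕ) - (j : ℕ))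
            * Real.sqrt (b * c) ^ (-(((i : ℕ) : ℤ) - ((j : ℕ) : ℤ) + 1))
            * chebU (j : ℕ) d * chebU (n - 1 - (i : ℕ)) d / chebU n d) := by
  set s := Real.sqrt (b * c) with hs_def
  have hs : s ≠ 0 := (Real.sqrt_pos.mpr hbc).ne'
  have hsq : s * s = b * c := Real.mul_self_sqrt hbc.le
  have hb : b ≠ 0 := by rintro rfl; simp at hbc
  have ha : a = 2 * d * s := by rw [hd]; field_simp
  rw [chebU_eq] at hU
  have hmul : triToep n a b c * Matrix.of (fun i j : Fin n => gZ n s (-b / s) d (i : ℕ) (j : ℕ))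
      = 1 := by
    ext i j
    rw [Matrix.mul_apply]
    simp only [Matrix.of_apply]
    have hj := j.isLt
    rw [triToep_sum n a b c (fun k => gZ n s (-b / s) d k (j : ℕ)) ?_ ?_ i, ha,
      gZ_rec n b c s d hs hb hsq hU i j, Matrix.one_apply]
    · simp [Fin.ext_iff]
    · simp only [gZ]
      rw [min_eq_left (by omega), uZ_neg_one]
      simp
    · simp only [gZ]
      rw [max_eq_left (by omega)]
      have : (n : ℤ) - 1 - n = -1 := by ring
      rw [this, uZ_neg_one]
      simp
  refine ⟨IsUnit.of_mul_eq_one _ hmul, ?_⟩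
  rw [Matrix.inv_eq_right_inv hmul]
  intro i j
  obtain ⟨i, hi⟩ := i
  obtain ⟨j, hj⟩ := j
  simp only [Matrix.of_apply, chebU_eq, gZ]
  constructor
  · intro h
    obtain ⟨k, rfl⟩ := Nat.exists_eq_add_of_le h
    have e1 : ((n - 1 - (i + k) : ℕ) : ℤ) = (n : ℤ) - 1 - ((i + k : ℕ) : ℤ) := by omega
    have e2 : (((i + k : ℕ) : ℤ) - (i : ℤ)) = (k : ℤ) := by push_cast; ring
    have e3 : (-1 : ℝ) ^ (i + (i + k)) = (-1) ^ k := by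
      rw [← add_assoc, pow_add, Even.neg_one_pow ⟨i, rfl⟩, one_mul]
    rw [min_eq_left (by omega), max_eq_right (by omega), e1, e2, e3, Nat.add_sub_cancel_left,
      zpow_natCast, zpow_neg, zpow_add_one₀ hs, zpow_natCast, div_pow, neg_pow]
    field_simp
  · intro h
    obtain ⟨k, rfl⟩ := Nat.exists_eq_add_of_le h.le
    have e1 : ((n - 1 - (j + k) : ℕ) : ℤ) = (n : ℤ) - 1 - ((j + k : ℕ) : ℤ) := by omega
    have e2 : (((j + k : ℕ) : ℤ) - (j : ℤ)) = (k : ℤ) := by push_cast; ring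
    have e2' : ((j : ℤ) - ((j + k : ℕ) : ℤ)) = -(k : ℤ) := by push_cast; ring
    have e3 : (-1 : ℝ) ^ (j + k + j) = (-1) ^ k := by
      rw [add_right_comm, pow_add, Even.neg_one_pow ⟨j, rfl⟩, one_mul]
    have e4 : (-b / s)⁻¹ = -1 * (c / s) := by field_simp; linarith
    rw [min_eq_right (by omega), max_eq_left (by omega), e1, e2, e2', e3, Nat.add_sub_cancel_left,
      zpow_neg, zpow_natCast, ← inv_pow, e4, zpow_neg, zpow_add_one₀ hs, zpow_natCast, mul_pow,
      div_pow]
    field_simp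
end
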